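/- Let 𝔽 be an infinite field and let U ⊆ 𝔽^{n+1} be a Zariski dense open subset. Then for every nonzero vector q ∈ 𝔽^{n+1} there exist two linearly independent points p, p′ ∈ U such that q is a linear combination of p and p′. Consequently, if every point of U has X-rank at most r with respect to a variety X, then every nonzero vector of 𝔽^{n+1} has X-rank at most 2r. -/

import Mathlib

open MvPolynomial

/-- The zero locus in affine space `σ → F` of a set `I` of polynomials. -/
def zLocus {F : Type*} [CommSemiring F] {σ : Type*} (I : Set (MvPolynomial σ F)) :
    Set (σ → F) :=
  {x | ∀ p ∈ I, eval x p = 0}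

/-- A subset of affine space is Zariski closed if it is the zero locus of a set of
polynomials. -/
def IsZClosed {F : Type*} [CommSemiring F] {σ : Type*} (S : Set (σ → F)) : Prop :=
  ∃ I : Set (MvPolynomial σ F), S = zLocus I

/-- Zariski open subsets of affine space. -/
def IsZOpen {F : Type*} [CommSemiring F] {σ : Type*} (S : Set (σ → F)) : Prop :=
  IsZClosed Sᶜ

/-- Zariski dense subsets of affine space. -/
def IsZDense {F : Type*} [CommSemiring F] {σ : Type*} (S : Set (σ → F)) : Prop :=
  ∀ C : Set (σ → F), IsZClosed C → S ⊆ C → C = Set.univ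

/-- Irreducibility with respect to the Zariski topology. -/
def IsZIrreducible {F : Type*} [CommSemiring F] {σ : Type*} (S : Set (σ → F)) : Prop :=
  S.Nonempty ∧ ∀ C₁ C₂ : Set (σ → F), IsZClosed C₁ → IsZClosed C₂ →
    S ⊆ C₁ ∪ C₂ → (S ⊆ C₁ ∨ S ⊆ C₂)

/-- An affine cone: a subset closed under scalar multiplication. -/
def IsCone {F : Type*} [CommSemiring F] {σ : Type*} (S : Set (σ → F)) : Prop :=
  ∀ (c : F), ∀ x ∈ S, c • x ∈ S

/-- The set of vectors expressible as a sum of exactly `r` elements of `S`. -/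
def sumsOf {F : Type*} [CommSemiring F] {σ : Type*} (S : Set (σ → F)) (r : ℕ) :
    Set (σ → F) :=
  {v | ∃ f : Fin r → (σ → F), (∀ i, f i ∈ S) ∧ ∑ i, f i = v}

/-- The `X`-rank of a vector with respect to the affine cone `S`: the least number of
elements of `S` summing to it (`⊤` if there is no such decomposition). -/
noncomputable def xRank {F : Type*} [CommSemiring F] {σ : Type*} (S : Set (σ → F))
    (v : σ → F) : ℕ∞ :=
  sInf {r : ℕ∞ | ∃ s : ℕ, r = s ∧ v ∈ sumsOf S s}

/-- The Zariski closure of a subset of affine space. -/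
def zClosure {F : Type*} [CommSemiring F] {σ : Type*} (S : Set (σ → F)) : Set (σ → F) :=
  ⋂₀ {C : Set (σ → F) | IsZClosed C ∧ S ⊆ C}

/-- The (affine cone over the) `r`-th secant variety: the Zariski closure of the set of
points of `X`-rank at most `r`. -/
noncomputable def secantCone {F : Type*} [CommSemiring F] {σ : Type*}
    (Xhat : Set (σ → F)) (r : ℕ) : Set (σ → F) :=
  zClosure {v | xRank Xhat v ≤ (r : ℕ∞)}

/-!
Translations are homeomorphisms of the Zariski topology and a finite intersection of dense open
sets is dense open, so `U ∩ (U - q)` is dense. Hence it has a point `u` outside a hyperplane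
containing `q`; then `u` and `u + q` are linearly independent points of `U`, and
`q = (u + q) - u`.
-/

section CommSemiring

variable {R σ τ : Type*} [CommSemiring R] {S : Set (σ → R)}

lemma IsZClosed.union [NoZeroDivisors R] {T : Set (σ → R)} (hS : IsZClosed S)
    (hT : IsZClosed T) : IsZClosed (S ∪ T) := by
  obtain ⟨I, rfl⟩ := hS
  obtain ⟨J, rfl⟩ := hT
  refine ⟨Set.image2 (· * ·) I J, Set.ext fun x => ?_⟩
  simp only [zLocus, Set.mem_union, Set.mem_ofPred_eq, Set.forall_mem_image2, map_mul,
    mul_eq_zero]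
  exact ⟨fun h p hp r hr => h.imp (· p hp) (· r hr), by grind⟩

lemma IsZClosed.preimage_eval (hS : IsZClosed S) (g : σ → MvPolynomial τ R) :
    IsZClosed ((fun x i => eval x (g i)) ⁻¹' S) := by
  obtain ⟨I, rfl⟩ := hS
  refine ⟨bind₁ g '' I, Set.ext fun x => ?_⟩
  have eval_bind₁ (p : MvPolynomial σ R) :
      eval x (bind₁ g p) = eval (fun i => eval x (g i)) p :=
    eval₂Hom_bind₁ _ _ _ p
  simp only [zLocus, Set.mem_preimage, Set.mem_ofPred_eq, Set.forall_mem_image, eval_bind₁]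

lemma IsZClosed.preimage_add_right (hS : IsZClosed S) (q : σ → R) :
    IsZClosed ((· + q) ⁻¹' S) := by
  convert hS.preimage_eval fun i => X i + C (q i) using 3 with x
  simp only [map_add, eval_X, eval_C, Pi.add_def]

lemma IsZOpen.preimage_add_right (hS : IsZOpen S) (q : σ → R) : IsZOpen ((· + q) ⁻¹' S) :=
  IsZClosed.preimage_add_right hS q

lemma IsZDense.inter_of_isZOpen_right [NoZeroDivisors R] {T : Set (σ → R)} (hS : IsZDense S)
    (hT : IsZDense T) (hTopen : IsZOpen T) : IsZDense (S ∩ T) := by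
  intro C hC hSTC
  have hcover : Tᶜ ∪ C = Set.univ :=
    hS _ (hTopen.union hC) ((Set.inter_subset S T C).mp hSTC)
  have hTC : T ⊆ C := by simpa only [compl_compl] using Set.compl_subset_iff_union.mpr hcover
  exact hT C hC hTC

lemma IsZDense.exists_mem_eval_ne_zero (hS : IsZDense S) {p : MvPolynomial σ R} {x : σ → R}
    (hx : eval x p ≠ 0) : ∃ u ∈ S, eval u p ≠ 0 := by
  by_contra! h
  have hlocus : zLocus {p} = Set.univ := hS _ ⟨_, rfl⟩ fun u hu => by simpa [zLocus] using h u hu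
  have hxp : x ∈ zLocus {p} := hlocus ▸ Set.mem_univ x
  exact hx (hxp p rfl)

lemma IsZDense.nonempty [Nontrivial R] (hS : IsZDense S) : S.Nonempty := by
  obtain ⟨u, hu, -⟩ := hS.exists_mem_eval_ne_zero (p := 1) (x := 0) (by simp)
  exact ⟨u, hu⟩

lemma IsCone.smul_mem_sumsOf (hS : IsCone S) (c : R) {r : ℕ} {v : σ → R}
    (hv : v ∈ sumsOf S r) : c • v ∈ sumsOf S r := by
  obtain ⟨f, hf, rfl⟩ := hv
  exact ⟨fun i => c • f i, fun i => hS c _ (hf i), Finset.smul_sum.symm⟩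

lemma add_mem_sumsOf {r s : ℕ} {v w : σ → R} (hv : v ∈ sumsOf S r) (hw : w ∈ sumsOf S s) :
    v + w ∈ sumsOf S (r + s) := by
  obtain ⟨f, hf, rfl⟩ := hv
  obtain ⟨g, hg, rfl⟩ := hw
  refine ⟨Fin.append f g, Fin.addCases (fun i => ?_) fun i => ?_, by simp [Fin.sum_univ_add]⟩
  · simpa using hf i
  · simpa using hg i

end CommSemiring

section CommRing

variable {R σ : Type*} [CommRing R] {U : Set (σ → R)}

lemma IsZDense.preimage_add_right (hU : IsZDense U) (q : σ → R) :
    IsZDense ((· + q) ⁻¹' U) := by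
  intro C hC hUC
  have htranslate : (· + -q) ⁻¹' C = Set.univ :=
    hU _ (hC.preimage_add_right (-q)) fun x hx => hUC (by simpa using hx)
  refine Set.eq_univ_of_forall fun x => ?_
  simpa using Set.eq_univ_iff_forall.mp htranslate (x + q)

lemma IsZDense.inter_preimage_add_right [NoZeroDivisors R] (hU : IsZDense U) (hUopen : IsZOpen U)
    (q : σ → R) : IsZDense (U ∩ (· + q) ⁻¹' U) :=
  hU.inter_of_isZOpen_right (hU.preimage_add_right q) (hUopen.preimage_add_right q)

lemma IsCone.sub_mem_sumsOf {S : Set (σ → R)} (hS : IsCone S) {r s : ℕ} {v w : σ → R}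
    (hv : v ∈ sumsOf S r) (hw : w ∈ sumsOf S s) : v - w ∈ sumsOf S (r + s) := by
  rw [sub_eq_add_neg, ← neg_one_smul R w]
  exact add_mem_sumsOf hv (hS.smul_mem_sumsOf (-1) hw)

variable [IsDomain R]

lemma linearIndependent_pair_of_minor_ne_zero {u v : σ → R} {i j : σ}
    (h : u i * v j - u j * v i ≠ 0) : LinearIndependent R ![u, v] := by
  have hrows : LinearIndependent R (!![u i, u j; v i, v j]).row :=
    Matrix.linearIndependent_rows_of_det_ne_zero (A := !![u i, u j; v i, v j]) <| by
      rwa [Matrix.det_fin_two_of]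
  refine LinearIndependent.of_comp (LinearMap.funLeft R R ![i, j]) ?_
  convert hrows using 1
  ext a b
  fin_cases a <;> fin_cases b <;> rfl

lemma IsZDense.exists_mem_linearIndependent_pair [Nontrivial σ] (hU : IsZDense U)
    {q : σ → R} (hq : q ≠ 0) : ∃ u ∈ U, LinearIndependent R ![u, q] := by
  classical
  obtain ⟨j, hj⟩ := Function.ne_iff.mp hq
  obtain ⟨i, hij⟩ := exists_ne j
  let minor : MvPolynomial σ R := X i * C (q j) - X j * C (q i)
  have hminor : eval (Pi.single i 1) minor ≠ 0 := by simpa [minor, hij.symm] using hj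
  obtain ⟨u, hu, hne⟩ := hU.exists_mem_eval_ne_zero hminor
  exact ⟨u, hu, linearIndependent_pair_of_minor_ne_zero (by simpa [minor] using hne)⟩

lemma IsZDense.exists_linearIndependent_pair_mem_span [Nontrivial σ] (hU : IsZDense U)
    (hUopen : IsZOpen U) {q : σ → R} (hq : q ≠ 0) :
    ∃ p p' : σ → R, p ∈ U ∧ p' ∈ U ∧
      LinearIndependent R ![p, p'] ∧ q ∈ Submodule.span R {p, p'} := by
  obtain ⟨u, ⟨hu, huq⟩, hli⟩ :=
    (hU.inter_preimage_add_right hUopen q).exists_mem_linearIndependent_pair hq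
  exact ⟨u, u + q, hu, huq, LinearIndependent.pair_add_right_iff.mpr hli,
    Submodule.mem_span_pair.mpr ⟨-1, 1, by module⟩⟩

lemma IsZDense.exists_mem_sumsOf_le_two_mul (hU : IsZDense U) (hUopen : IsZOpen U)
    {S : Set (σ → R)} (hS : IsCone S) {r : ℕ} (hr : ∀ v ∈ U, ∃ s ≤ r, v ∈ sumsOf S s)
    (q : σ → R) : ∃ s ≤ 2 * r, q ∈ sumsOf S s := by
  obtain ⟨u, hu, huq⟩ := (hU.inter_preimage_add_right hUopen q).nonempty
  obtain ⟨s, hs, hus⟩ := hr u hu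
  obtain ⟨t, ht, huqt⟩ := hr (u + q) huq
  refine ⟨t + s, by lia, ?_⟩
  simpa only [add_sub_cancel_left] using hS.sub_mem_sumsOf huqt hus

theorem stmt_8_general [Nontrivial σ] (hUopen : IsZOpen U) (hUdense : IsZDense U) :
    (∀ q : σ → R, q ≠ 0 →
      ∃ p p' : σ → R, p ∈ U ∧ p' ∈ U ∧
        LinearIndependent R ![p, p'] ∧ q ∈ Submodule.span R {p, p'}) ∧
    (∀ Xhat : Set (σ → R), IsCone Xhat →
      ∀ r : ℕ, (∀ v ∈ U, ∃ s ≤ r, v ∈ sumsOf Xhat s) →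
        ∀ q : σ → R, ∃ s ≤ 2 * r, q ∈ sumsOf Xhat s) :=
  ⟨fun _ hq => hUdense.exists_linearIndependent_pair_mem_span hUopen hq,
    fun _ hX _ hr q => hUdense.exists_mem_sumsOf_le_two_mul hUopen hX hr q⟩

end CommRing

/-- Over an infinite field, if `U ⊆ 𝔽^{n+1}` is a Zariski dense open
set, then every nonzero vector is a linear combination of two linearly independent
points of `U`; consequently, if every point of `U` has `X`-rank at most `r`, then every
nonzero vector has `X`-rank at most `2r`. -/
theorem stmt_8 {F : Type*} [Field F] [Infinite F] {n : ℕ} (hn : 1 ≤ n)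
    (U : Set (Fin (n + 1) → F)) (hUopen : IsZOpen U) (hUdense : IsZDense U) :
    (∀ q : Fin (n + 1) → F, q ≠ 0 →
      ∃ p p' : Fin (n + 1) → F, p ∈ U ∧ p' ∈ U ∧
        LinearIndependent F ![p, p'] ∧ q ∈ Submodule.span F {p, p'}) ∧
    (∀ Xhat : Set (Fin (n + 1) → F), IsCone Xhat →
      ∀ r : ℕ, (∀ v ∈ U, ∃ s ≤ r, v ∈ sumsOf Xhat s) →
        ∀ q : Fin (n + 1) → F, q ≠ 0 → ∃ s ≤ 2 * r, q ∈ sumsOf Xhat s) := by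
  have : Nontrivial (Fin (n + 1)) := Fin.nontrivial_iff_two_le.mpr (by lia)
  obtain ⟨hspan, hrank⟩ := stmt_8_general hUopen hUdense
  exact ⟨hspan, fun Xhat hX r hr q _ => hrank Xhat hX r hr q⟩
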